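/- Let n ≥ 1 be an integer, r ≥ 1, ε ∈ (0,1), α, β real numbers and A > 0. There exist constants C > 0, c₀ > 0 and k₀ (depending only on n, r, ε, α, β, A) such that for every integer k ≥ k₀, every (α,β,A)-admissible function p : Λ_n → [0,∞), and every r-reduced n×n matrix Y with Y ≥ 1_n in the Loewner order: q_k(Y) ≤ C·[ (k^n/det(Y))^{(n+1)/4 − β} · k^{n/4 + α + ε} + exp(−c₀ k^{ε}) · det(Y)^{−(n+1)/2} ]. -/

import Mathlib

open scoped Real ENNReal

/-- `Λ_n`: real symmetric positive definite `n × n` matrices with integral diagonal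
entries such that `2T` has integer entries (half-integral matrices). -/
def IsHalfIntegral {n : ℕ} (T : Matrix (Fin n) (Fin n) ℝ) : Prop :=
  T.PosDef ∧ (∀ i, ∃ z : ℤ, T i i = z) ∧ (∀ i j, ∃ z : ℤ, 2 * T i j = z)

abbrev Lambda (n : ℕ) := {T : Matrix (Fin n) (Fin n) ℝ // IsHalfIntegral T}

/-- The Loewner order: `A ≤ B` iff `B - A` is positive semidefinite. -/
def LoewnerLE {n : ℕ} (A B : Matrix (Fin n) (Fin n) ℝ) : Prop := (B - A).PosSemidef

/-- The diagonal part `Y_D` of a matrix `Y`. -/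
def diagPart {n : ℕ} (Y : Matrix (Fin n) (Fin n) ℝ) : Matrix (Fin n) (Fin n) ℝ :=
  Matrix.diagonal fun i => Y i i

/-- `Y` is `r`-reduced: positive definite with `Y_D / r ≤ Y ≤ r • Y_D` in the
Loewner order. -/
def MinkReduced {n : ℕ} (r : ℝ) (Y : Matrix (Fin n) (Fin n) ℝ) : Prop :=
  Y.PosDef ∧ LoewnerLE (r⁻¹ • diagPart Y) Y ∧ LoewnerLE Y (r • diagPart Y)

/-- `p : Λ_n → [0,∞)` is `(α,β,A)`-admissible for weight `k`:
`p(T)^{1/2} ≤ A · (4π)^{nk/2} · k^α · det(T)^{k/2−β} / Γ(k)^{n/2}`. -/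
def Admissible (n k : ℕ) (α β A : ℝ) (p : Lambda n → ℝ) : Prop :=
  (∀ T, 0 ≤ p T) ∧
  ∀ T : Lambda n, Real.sqrt (p T) ≤
    A * (4 * π) ^ ((n * k : ℝ) / 2) * (k : ℝ) ^ α *
      (T.1.det) ^ ((k : ℝ) / 2 - β) / Real.Gamma k ^ ((n : ℝ) / 2)

/-- `q_k(Y) = ∑_{T ∈ Λ_n} p(T)^{1/2} · det(Y)^{k/2} · exp(−2π tr(TY))`,
as a sum in `[0,∞]`. -/
noncomputable def qk (n k : ℕ) (p : Lambda n → ℝ)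
    (Y : Matrix (Fin n) (Fin n) ℝ) : ℝ≥0∞ :=
  ∑' T : Lambda n, ENNReal.ofReal
    (Real.sqrt (p T) * Y.det ^ ((k : ℝ) / 2) * Real.exp (-2 * π * (T.1 * Y).trace))


lemma exists_sq {n : ℕ} {M : Matrix (Fin n) (Fin n) ℝ} (hM : M.PosSemidef) :
    ∃ B : Matrix (Fin n) (Fin n) ℝ, M = B.transpose * B := by
  open scoped MatrixOrder in
  have h := CStarAlgebra.nonneg_iff_eq_star_mul_self.mp (Matrix.nonneg_iff_posSemidef.mpr hM)
  simpa [Matrix.star_eq_conjTranspose] using h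

lemma trace_mul_nonneg' {n : ℕ} {M N : Matrix (Fin n) (Fin n) ℝ} (hM : M.PosSemidef)
    (hN : N.PosSemidef) : 0 ≤ (M * N).trace := by
  obtain ⟨B, rfl⟩ := exists_sq hN
  have h := (hM.mul_mul_conjTranspose_same B).trace_nonneg
  rw [Matrix.conjTranspose_eq_transpose_of_trivial] at h
  rwa [← Matrix.mul_assoc, Matrix.trace_mul_comm, ← Matrix.mul_assoc]

lemma eig {n : ℕ} {U : Matrix (Fin n) (Fin n) ℝ} (hU : U.PosDef) :
    ∃ l : Fin n → ℝ, (∀ i, 0 < l i) ∧ U.trace = ∑ i, l i ∧ U.det = ∏ i, l i ∧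
      ((U - 1) * (U - 1)).trace = ∑ i, (l i - 1) ^ 2 := by
  refine ⟨hU.1.eigenvalues, hU.eigenvalues_pos, ?_, ?_, ?_⟩
  · simpa using hU.1.trace_eq_sum_eigenvalues
  · simpa using hU.1.det_eq_prod_eigenvalues
  · have h := hU.1.spectral_theorem
    set V := hU.1.eigenvectorUnitary
    set d : Matrix (Fin n) (Fin n) ℝ := Matrix.diagonal (RCLike.ofReal ∘ hU.1.eigenvalues) with hd
    rw [Unitary.conjStarAlgAut_apply] at h
    have hV : (V : Matrix (Fin n) (Fin n) ℝ) * star (V : Matrix (Fin n) (Fin n) ℝ) = 1 :=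
      Unitary.mul_star_self_of_mem V.2
    have hV' : star (V : Matrix (Fin n) (Fin n) ℝ) * (V : Matrix (Fin n) (Fin n) ℝ) = 1 :=
      Unitary.star_mul_self_of_mem V.2
    have h1 : U - 1 = V * (d - 1) * star (V : Matrix (Fin n) (Fin n) ℝ) := by
      rw [Matrix.mul_sub, Matrix.sub_mul, Matrix.mul_one, hV]
      exact congrArg (· - 1) h
    have h2 : (U - 1) * (U - 1) = V * ((d - 1) * (d - 1)) * star (V : Matrix (Fin n) (Fin n) ℝ) := by
      rw [h1]
      calc _ = (V : Matrix (Fin n) (Fin n) ℝ) * (d - 1) * (star (V : Matrix (Fin n) (Fin n) ℝ) * V) * (d - 1) * star (V : Matrix (Fin n) (Fin n) ℝ) := by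
            simp only [Matrix.mul_assoc]
        _ = _ := by rw [hV']; simp only [Matrix.mul_assoc, Matrix.one_mul]
    rw [h2, Matrix.trace_mul_comm, ← Matrix.mul_assoc, hV', Matrix.one_mul]
    have : d - 1 = Matrix.diagonal (fun i => hU.1.eigenvalues i - 1) := by
      rw [hd, ← Matrix.diagonal_one, Matrix.diagonal_sub]; rfl
    rw [this, Matrix.diagonal_mul_diagonal, Matrix.trace_diagonal]
    simp [sq]

/-- simultaneous data for the pair `T`, `Y` -/
lemma eigTY {n : ℕ} {T Y : Matrix (Fin n) (Fin n) ℝ} (hT : T.PosDef) (hY : Y.PosDef)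
    {t : ℝ} (ht : 0 < t) :
    ∃ l : Fin n → ℝ, (∀ i, 0 < l i) ∧ t * (T * Y).trace = ∑ i, l i ∧
      t ^ n * T.det * Y.det = ∏ i, l i ∧
      t ^ 2 * ((T - t⁻¹ • Y⁻¹) * Y * (T - t⁻¹ • Y⁻¹) * Y).trace = ∑ i, (l i - 1) ^ 2 := by
  obtain ⟨B, hB⟩ := exists_sq hY.posSemidef
  have hdet : Y.det = B.det * B.det := by rw [hB, Matrix.det_mul, Matrix.det_transpose]
  have hBd : IsUnit B.det := by
    have := hY.det_pos
    rw [hdet] at this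
    exact isUnit_iff_ne_zero.mpr (fun h => by simp [h] at this)
  have hBu : IsUnit B := (Matrix.isUnit_iff_isUnit_det B).mpr hBd
  have hYu : IsUnit Y.det := isUnit_iff_ne_zero.mpr hY.det_pos.ne'
  have hU : (t • (B * T * B.transpose)).PosDef := by
    refine Matrix.PosDef.smul ?_ ht
    have := (Matrix.IsUnit.posDef_star_right_conjugate_iff (x := T) hBu).mpr hT
    simpa [Matrix.star_eq_conjTranspose] using this
  obtain ⟨l, h0, h1, h2, h3⟩ := eig hU
  refine ⟨l, h0, ?_, ?_, ?_⟩
  · rw [← h1, Matrix.trace_smul, smul_eq_mul, hB, ← Matrix.mul_assoc, Matrix.trace_mul_comm (T * B.transpose) B, Matrix.mul_assoc]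
  · rw [← h2, Matrix.det_smul, Matrix.det_mul, Matrix.det_mul, Matrix.det_transpose, hdet]
    simp; ring
  · rw [← h3]
    set E := T - t⁻¹ • Y⁻¹ with hE
    have hone : B * Y⁻¹ * B.transpose = 1 := by
      have hBt : IsUnit B.transpose.det := by rwa [Matrix.det_transpose]
      rw [hB, Matrix.mul_inv_rev, ← Matrix.mul_assoc, Matrix.mul_nonsing_inv _ hBd, Matrix.one_mul,
        Matrix.nonsing_inv_mul _ hBt]
    have : t • (B * T * B.transpose) - 1 = t • (B * E * B.transpose) := by
      rw [hE, Matrix.mul_sub, Matrix.sub_mul, smul_sub]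
      simp only [Matrix.mul_smul, Matrix.smul_mul, smul_smul, hone]
      rw [mul_inv_cancel₀ ht.ne', one_smul]
    rw [this]
    rw [Matrix.mul_smul, Matrix.smul_mul, Matrix.trace_smul, Matrix.trace_smul, smul_eq_mul,
      smul_eq_mul, ← mul_assoc, ← sq]
    congr 1
    calc (E * Y * E * Y).trace = (E * Y * E * B.transpose * B).trace := by
          conv_lhs => rw [hB]
          rw [← hB]; simp only [Matrix.mul_assoc]; congr 1; simp only [hB, Matrix.mul_assoc]
      _ = (B * (E * Y * E * B.transpose)).trace := Matrix.trace_mul_comm _ _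
      _ = _ := by rw [hB]; simp only [Matrix.mul_assoc]

lemma log_det_le {n : ℕ} {U : Matrix (Fin n) (Fin n) ℝ} (hU : U.PosDef) :
    Real.log U.det ≤ U.trace - n := by
  obtain ⟨l, h0, h1, h2, h3⟩ := eig hU
  rw [h1, h2, Real.log_prod (fun i _ => (h0 i).ne')]
  have : ∑ i : Fin n, Real.log (l i) ≤ ∑ i, (l i - 1) :=
    Finset.sum_le_sum fun i _ => Real.log_le_sub_one_of_pos (h0 i)
  simpa using this

lemma det_le_prod_diag {n : ℕ} {Y : Matrix (Fin n) (Fin n) ℝ} (hY : Y.PosDef) :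
    Y.det ≤ ∏ i, Y i i := by
  have hd : ∀ i, 0 < Y i i := fun i => hY.diag_pos
  set s : Matrix (Fin n) (Fin n) ℝ := Matrix.diagonal fun i => (√(Y i i))⁻¹ with hs
  have hsd : s.det = ∏ i, (√(Y i i))⁻¹ := by rw [hs, Matrix.det_diagonal]
  have hsdp : 0 < s.det := by
    rw [hsd]; exact Finset.prod_pos fun i _ => inv_pos.mpr (Real.sqrt_pos.mpr (hd i))
  have hsu : IsUnit s := (Matrix.isUnit_iff_isUnit_det s).mpr (isUnit_iff_ne_zero.mpr hsdp.ne')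
  have hU : (s * Y * s).PosDef := by
    have := (Matrix.IsUnit.posDef_star_right_conjugate_iff (x := Y) hsu).mpr hY
    simpa [Matrix.star_eq_conjTranspose, hs] using this
  have h := log_det_le hU
  have htr : (s * Y * s).trace = n := by
    simp only [Matrix.trace, hs, Matrix.diag, Matrix.mul_diagonal, Matrix.diagonal_mul]
    have : ∀ i, (√(Y i i))⁻¹ * Y i i * (√(Y i i))⁻¹ = 1 := fun i => by
      have h1 := Real.sq_sqrt (hd i).le
      have h2 := Real.sqrt_pos.mpr (hd i)
      field_simp; linarith
    simp [this]
  rw [htr, sub_self, Matrix.det_mul, Matrix.det_mul] at h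
  have hp : 0 < s.det * Y.det * s.det := mul_pos (mul_pos hsdp hY.det_pos) hsdp
  have h' : s.det * Y.det * s.det ≤ 1 := by
    have := (Real.log_le_log_iff hp one_pos).mp (by simpa using h)
    exact this
  have hss : s.det * s.det * ∏ i, Y i i = 1 := by
    rw [hsd, ← Finset.prod_mul_distrib, ← Finset.prod_mul_distrib]
    refine Finset.prod_eq_one fun i _ => ?_
    have h1 := Real.sq_sqrt (hd i).le
    have h2 := Real.sqrt_pos.mpr (hd i)
    field_simp; linarith
  have : s.det * s.det * Y.det ≤ s.det * s.det * ∏ i, Y i i := by rw [hss]; linarith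
  exact le_of_mul_le_mul_left this (mul_pos hsdp hsdp)

lemma one_le_det {n : ℕ} {Y : Matrix (Fin n) (Fin n) ℝ} (hY : Y.PosDef)
    (h : (Y - 1).PosSemidef) : 1 ≤ Y.det := by
  have := hY.1.det_eq_prod_eigenvalues
  rw [this]
  have key : ∀ i, 1 ≤ hY.1.eigenvalues i := by
    intro i
    have h1 := h.dotProduct_mulVec_nonneg (hY.1.eigenvectorBasis i)
    rw [Matrix.sub_mulVec, hY.1.mulVec_eigenvectorBasis, Matrix.one_mulVec, dotProduct_sub,
      dotProduct_smul, smul_eq_mul] at h1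
    have h2 : 0 < star (hY.1.eigenvectorBasis i : Fin n → ℝ) ⬝ᵥ (hY.1.eigenvectorBasis i) := by
      rw [Matrix.dotProduct_star_self_pos_iff]
      intro h0
      exact hY.1.eigenvectorBasis.orthonormal.ne_zero i (by ext j; exact congrFun h0 j)
    by_contra hlt
    push Not at hlt
    nlinarith
  calc (1 : ℝ) = ∏ i : Fin n, 1 := by simp
    _ ≤ _ := Finset.prod_le_prod (fun _ _ => zero_le_one) (fun i _ => by simpa using key i)

lemma trace_mul_diag {n : ℕ} (T : Matrix (Fin n) (Fin n) ℝ) (d : Fin n → ℝ) :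
    (T * Matrix.diagonal d).trace = ∑ i, T i i * d i := by
  simp [Matrix.trace, Matrix.mul_diagonal]

lemma trace_TY_ge {n : ℕ} {r : ℝ} {T Y : Matrix (Fin n) (Fin n) ℝ} (hT : T.PosSemidef)
    (h : LoewnerLE (r⁻¹ • diagPart Y) Y) :
    r⁻¹ * ∑ i, T i i * Y i i ≤ (T * Y).trace := by
  have h1 := trace_mul_nonneg' hT h
  rw [Matrix.mul_sub, Matrix.trace_sub, Matrix.mul_smul, Matrix.trace_smul, diagPart,
    trace_mul_diag, smul_eq_mul] at h1
  linarith

lemma trace_EYEY_ge {n : ℕ} {r : ℝ} (hr : 0 < r) {E Y : Matrix (Fin n) (Fin n) ℝ}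
    (hE : E.IsHermitian) (hY : Y.PosDef)
    (h : LoewnerLE (r⁻¹ • diagPart Y) Y) :
    (r⁻¹) ^ 2 * ∑ i, ∑ j, Y i i * Y j j * E i j ^ 2 ≤ (E * Y * E * Y).trace := by
  have hEs : ∀ i j, E j i = E i j := fun i j => by
    have := hE.apply i j; simpa using this
  have h1 : (E * Y * E).PosSemidef := by
    have := hY.posSemidef.mul_mul_conjTranspose_same E
    rwa [hE.eq] at this
  have h2 := trace_TY_ge h1 h
  have hDD : (diagPart Y).PosSemidef := Matrix.PosSemidef.diagonal fun i => (hY.diag_pos (i := i)).le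
  have h3 : (E * diagPart Y * E).PosSemidef := by
    have := hDD.mul_mul_conjTranspose_same E
    rwa [hE.eq] at this
  have h4 := trace_TY_ge h3 h
  have e1 : ∑ i, (E * Y * E) i i * Y i i = (E * diagPart Y * E * Y).trace := by
    rw [← trace_mul_diag]
    change (E * Y * E * diagPart Y).trace = _
    rw [Matrix.mul_assoc, Matrix.trace_mul_comm]
    simp only [Matrix.mul_assoc]
  have e2 : ∑ i, (E * diagPart Y * E) i i * Y i i = ∑ i, ∑ j, Y i i * Y j j * E i j ^ 2 := by
    refine Finset.sum_congr rfl fun i _ => ?_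
    rw [Matrix.mul_apply, Finset.sum_mul]
    refine Finset.sum_congr rfl fun j _ => ?_
    rw [diagPart, Matrix.mul_diagonal, hEs i j]; ring
  rw [e1] at h2
  rw [e2] at h4
  have hr' : 0 < r⁻¹ := inv_pos.mpr hr
  calc _ = r⁻¹ * (r⁻¹ * ∑ i, ∑ j, Y i i * Y j j * E i j ^ 2) := by ring
    _ ≤ r⁻¹ * (E * diagPart Y * E * Y).trace := by gcongr
    _ ≤ _ := h2

/-- `φ(u) = u - 1 - log u`. -/
noncomputable def phi (u : ℝ) : ℝ := u - 1 - Real.log u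

lemma log_le_sqrt {u : ℝ} (hu : 0 < u) : Real.log u ≤ 2 * (√u - 1) := by
  have h := Real.log_le_sub_one_of_pos (Real.sqrt_pos.mpr hu)
  rw [Real.log_sqrt hu.le] at h
  linarith

lemma phi_ge {u : ℝ} (hu : 0 < u) : (u - 1) ^ 2 ≤ phi u * (2 * (u + 1)) := by
  have h := log_le_sqrt hu
  have hs := Real.sqrt_nonneg u
  have h2 := Real.sq_sqrt hu.le
  have h3 : (√u - 1) ^ 2 ≤ phi u := by unfold phi; nlinarith
  calc (u - 1) ^ 2 = (√u - 1) ^ 2 * (√u + 1) ^ 2 := by rw [← h2]; simp [Real.sqrt_sq hs]; ring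
    _ ≤ (√u - 1) ^ 2 * (2 * (u + 1)) := by
        gcongr; nlinarith [sq_nonneg (√u - 1)]
    _ ≤ _ := by gcongr

lemma phi_nonneg {u : ℝ} (hu : 0 < u) : 0 ≤ phi u := by
  have := Real.log_le_sub_one_of_pos hu
  unfold phi; linarith

lemma phi_near {u : ℝ} (hu : 0 < u) (h : u ≤ 3 / 2) : (u - 1) ^ 2 / 5 ≤ phi u := by
  have h1 := phi_ge hu
  have h2 := phi_nonneg hu
  nlinarith

lemma phi_far {u : ℝ} (hu : 0 < u) (h : 1 / 2 < |u - 1|) : 1 / 20 ≤ phi u := by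
  have h1 := phi_ge hu
  have h2 := phi_nonneg hu
  by_contra hc
  push Not at hc
  rcases lt_abs.mp h with h | h
  · nlinarith
  · nlinarith

lemma phi_lin {u : ℝ} (hu : 0 < u) : u / 4 - 1 ≤ phi u := by
  have h1 := phi_ge hu
  by_contra hc
  push Not at hc
  nlinarith

lemma abs_log_le {u : ℝ} (hu : 0 < u) : |Real.log u| ≤ phi u + 1 := by
  rw [abs_le]
  have h := log_le_sqrt hu
  have h2 := Real.sq_sqrt hu.le
  unfold phi
  constructor
  · linarith
  · nlinarith [sq_nonneg (√u - 2)]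

lemma log_gamma_ge {k : ℕ} (hk : 1 ≤ k) :
    (k - 1 / 2 : ℝ) * Real.log k - k ≤ Real.log (Real.Gamma k) := by
  obtain ⟨m, rfl⟩ : ∃ m, k = m + 1 := ⟨k - 1, by omega⟩
  have hg : Real.Gamma ((m + 1 : ℕ) : ℝ) = m.factorial := by
    push_cast; exact Real.Gamma_nat_eq_factorial m
  have h := Stirling.le_log_factorial_stirling (n := m + 1) (by omega)
  have hf : Real.log ((m + 1).factorial : ℝ) = Real.log ((m + 1 : ℕ) : ℝ) + Real.log (m.factorial : ℝ) := by
    rw [Nat.factorial_succ, Nat.cast_mul, Real.log_mul]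
    · positivity
    · positivity
  rw [hf] at h
  rw [hg]
  have : 0 ≤ Real.log (2 * π) := Real.log_nonneg (by nlinarith [Real.pi_gt_three])
  linarith

/-- exponent comparison for one term -/
lemma term_bound {n k : ℕ} (hk : 1 ≤ k) {α β A dT dY tr : ℝ} (hA : 0 < A) (hkβ : 4 * |β| ≤ k)
    (hT : 0 < dT) (hY : 0 < dY) {s : ℝ}
    (hs : s ≤ A * (4 * π) ^ ((n * k : ℝ) / 2) * (k : ℝ) ^ α *
      dT ^ ((k : ℝ) / 2 - β) / Real.Gamma k ^ ((n : ℝ) / 2))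
    {l : Fin n → ℝ} (hl : ∀ i, 0 < l i) (h1 : (4 * π / k) * tr = ∑ i, l i)
    (h2 : (4 * π / k) ^ n * dT * dY = ∏ i, l i) :
    s * dY ^ ((k : ℝ) / 2) * Real.exp (-2 * π * tr) ≤
      (A * (4 * π) ^ (n * β) * Real.exp (n * |β|)) *
        ((k : ℝ) ^ (α + n / 4 - n * β) * dY ^ β) * Real.exp (-(k / 4 : ℝ) * ∑ i, phi (l i)) := by
  have hk0 : (0 : ℝ) < k := by exact_mod_cast hk
  have hpi := Real.pi_pos
  have h4 : (0 : ℝ) < 4 * π := by positivity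
  have hG : 0 < Real.Gamma k := Real.Gamma_pos_of_pos hk0
  have hlog : n * (Real.log (4 * π) - Real.log k) + Real.log dT + Real.log dY
      = ∑ i, Real.log (l i) := by
    rw [← Real.log_prod (fun i _ => (hl i).ne'), ← h2, Real.log_mul (by positivity) hY.ne',
      Real.log_mul (by positivity) hT.ne', Real.log_pow, Real.log_div h4.ne' hk0.ne']
  have hphi : ∑ i, phi (l i) = (4 * π / k) * tr - n - ∑ i, Real.log (l i) := by
    rw [h1]; simp [phi, Finset.sum_sub_distrib]
  have habs : |∑ i, Real.log (l i)| ≤ ∑ i, phi (l i) + n := by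
    refine (Finset.abs_sum_le_sum_abs _ _).trans ?_
    refine (Finset.sum_le_sum fun i _ => abs_log_le (hl i)).trans ?_
    simp [Finset.sum_add_distrib]
  have hPhi0 : 0 ≤ ∑ i, phi (l i) := Finset.sum_nonneg fun i _ => phi_nonneg (hl i)
  set L := ∑ i, Real.log (l i) with hL
  set Φ := ∑ i, phi (l i) with hΦ
  have hgam := log_gamma_ge hk
  have hbL : -β * L ≤ |β| * (Φ + n) := by
    calc -β * L ≤ |β * L| := by rw [neg_mul]; exact neg_le_abs _
      _ = |β| * |L| := abs_mul _ _
      _ ≤ _ := by gcongr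
  refine (mul_le_mul_of_nonneg_right (mul_le_mul_of_nonneg_right hs
    (Real.rpow_nonneg hY.le _)) (Real.exp_nonneg _)).trans ?_
  have htr : 2 * π * tr = (k / 2) * (Φ + n + L) := by
    rw [hphi]; field_simp; ring
  rw [div_eq_mul_inv, ← Real.rpow_neg hG.le]
  simp only [Real.rpow_def_of_pos h4, Real.rpow_def_of_pos hk0, Real.rpow_def_of_pos hT,
    Real.rpow_def_of_pos hY, Real.rpow_def_of_pos hG]
  simp only [mul_assoc, ← Real.exp_add]
  refine mul_le_mul_of_nonneg_left (Real.exp_le_exp.mpr ?_) hA.le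
  have hdT : Real.log dT = L - n * (Real.log (4 * π) - Real.log k) - Real.log dY := by linarith
  rw [hdT]
  have e1 : -2 * (π * tr) = - ((k / 2) * (Φ + n + L)) := by linarith
  rw [e1]
  have hgn : ((k - 1 / 2 : ℝ) * Real.log k - k) * (n / 2) ≤ Real.log (Real.Gamma k) * (n / 2) := by
    gcongr
  have hbk : |β| * Φ ≤ k / 4 * Φ := by gcongr; linarith
  linarith

/-- pairs `i ≤ j` -/
abbrev Prs (n : ℕ) := {p : Fin n × Fin n // p.1 ≤ p.2}

lemma sum_pi_le {ι : Type*} [Fintype ι] [DecidableEq ι] (f : ι → ℤ → ℝ≥0∞) :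
    ∑' m : ι → ℤ, ∏ p, f p (m p) ≤ ∏ p, ∑' z, f p z := by
  refine ENNReal.summable.tsum_le_of_sum_le fun s => ?_
  set u : Finset ℤ := s.biUnion fun m => Finset.univ.image m with hu
  have hsub : s ⊆ Fintype.piFinset fun _ : ι => u := by
    intro m hm
    rw [Fintype.mem_piFinset]
    intro i
    exact Finset.mem_biUnion.mpr ⟨m, hm, Finset.mem_image_of_mem _ (Finset.mem_univ _)⟩
  calc ∑ m ∈ s, ∏ p, f p (m p) ≤ ∑ m ∈ Fintype.piFinset fun _ : ι => u, ∏ p, f p (m p) :=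
        Finset.sum_le_sum_of_subset hsub
    _ = ∏ p, ∑ z ∈ u, f p z := Finset.sum_prod_piFinset u f
    _ ≤ _ := Finset.prod_le_prod' fun p _ => ENNReal.sum_le_tsum _

lemma sum_lambda_le {n : ℕ} (f : Prs n → ℝ → ℝ≥0∞) :
    ∑' T : Lambda n, ∏ p : Prs n, f p (2 * T.1 p.1.1 p.1.2) ≤ ∏ p, ∑' z : ℤ, f p z := by
  choose Z hZ using fun T : Lambda n => T.2.2.2
  let F : Lambda n → (Prs n → ℤ) := fun T p => Z T p.1.1 p.1.2
  have hF : Function.Injective F := by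
    intro T T' h
    have key : ∀ i j, i ≤ j → T.1 i j = T'.1 i j := by
      intro i j hij
      have h1 := hZ T i j
      have h2 := hZ T' i j
      have h3 : Z T i j = Z T' i j := congrFun h ⟨(i, j), hij⟩
      rw [h3] at h1
      linarith
    apply Subtype.ext
    ext i j
    rcases le_total i j with hij | hij
    · exact key i j hij
    · have h1 := T.2.1.1.apply i j
      have h2 := T'.2.1.1.apply i j
      simp only [star_trivial] at h1 h2
      rw [← h1, ← h2, key j i hij]
  calc ∑' T : Lambda n, ∏ p : Prs n, f p (2 * T.1 p.1.1 p.1.2)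
      = ∑' T : Lambda n, (fun m : Prs n → ℤ => ∏ p, f p (m p)) (F T) := by
        refine tsum_congr fun T => Finset.prod_congr rfl fun p _ => ?_
        rw [hZ]
    _ ≤ ∑' m : Prs n → ℤ, ∏ p, f p (m p) := ENNReal.tsum_comp_le_tsum_of_injective hF _
    _ ≤ _ := sum_pi_le (fun p z => f p z)

lemma exp_sum {b : ℝ} (hb : 0 < b) (hb1 : b ≤ 1) :
    ∑' m : ℤ, ENNReal.ofReal (Real.exp (-b * |(m : ℝ)|)) ≤ ENNReal.ofReal (4 / b) := by
  have hq : Real.exp (-b) ≤ 1 - b / 2 := by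
    have h1 := Real.add_one_le_exp b
    rw [Real.exp_neg]
    have : (Real.exp b)⁻¹ ≤ (1 + b)⁻¹ := by
      apply inv_anti₀ <;> linarith
    refine this.trans ?_
    rw [inv_le_iff_one_le_mul₀ (by linarith)]
    nlinarith
  have hgeom : ∑' m : ℕ, ENNReal.ofReal (Real.exp (-b * m)) ≤ ENNReal.ofReal (2 / b) := by
    have : ∀ m : ℕ, ENNReal.ofReal (Real.exp (-b * m)) = ENNReal.ofReal (Real.exp (-b)) ^ m := by
      intro m
      rw [← ENNReal.ofReal_pow (Real.exp_nonneg _), ← Real.exp_nat_mul, mul_comm]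
    simp_rw [this]
    rw [ENNReal.tsum_geometric, ← ENNReal.ofReal_one, ← ENNReal.ofReal_sub _ (Real.exp_nonneg _),
      ← ENNReal.ofReal_inv_of_pos (by linarith)]
    apply ENNReal.ofReal_le_ofReal
    rw [show 2 / b = (b / 2)⁻¹ by rw [inv_div]]
    apply inv_anti₀ <;> linarith
  rw [tsum_of_nat_of_neg_add_one ENNReal.summable ENNReal.summable]
  calc _ ≤ ∑' m : ℕ, ENNReal.ofReal (Real.exp (-b * m)) + ∑' m : ℕ, ENNReal.ofReal (Real.exp (-b * m)) := by
        refine add_le_add (ENNReal.tsum_le_tsum fun m => ?_) (ENNReal.tsum_le_tsum fun m => ?_)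
        · simp
        · apply ENNReal.ofReal_le_ofReal
          apply Real.exp_le_exp.mpr
          push_cast
          have hm : (0 : ℝ) ≤ m := Nat.cast_nonneg m
          have : |-1 + -(m : ℝ)| = m + 1 := by
            rw [show -1 + -(m : ℝ) = -(m + 1) by ring, abs_neg, abs_of_nonneg (by positivity)]
          have h' : |-((m : ℝ) + 1)| = m + 1 := by rw [abs_neg, abs_of_nonneg (by positivity)]
          rw [h']; nlinarith
    _ ≤ ENNReal.ofReal (2 / b) + ENNReal.ofReal (2 / b) := add_le_add hgeom hgeom
    _ = _ := by rw [← ENNReal.ofReal_add (by positivity) (by positivity)]; congr 1; ring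

lemma gauss_sum {a b e : ℝ} (hb : 0 < b) (hb1 : b ≤ 1) (hab : b ^ 2 ≤ a) :
    ∑' m : ℤ, ENNReal.ofReal (Real.exp (-a * ((m : ℝ) - e) ^ 2)) ≤
      ENNReal.ofReal (Real.exp (5 / 4) * (4 / b)) := by
  have hpt : ∀ m : ℤ, ENNReal.ofReal (Real.exp (-a * ((m : ℝ) - e) ^ 2)) ≤
      ENNReal.ofReal (Real.exp (5 / 4)) * ENNReal.ofReal (Real.exp (-b * |((m - ⌊e⌋ : ℤ) : ℝ)|)) := by
    intro m
    rw [← ENNReal.ofReal_mul (Real.exp_nonneg _), ← Real.exp_add]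
    apply ENNReal.ofReal_le_ofReal
    apply Real.exp_le_exp.mpr
    have h1 : |((m - ⌊e⌋ : ℤ) : ℝ)| ≤ |(m : ℝ) - e| + 1 := by
      have e1 : ((m - ⌊e⌋ : ℤ) : ℝ) = ((m : ℝ) - e) + (e - ⌊e⌋) := by push_cast; ring
      rw [e1]
      refine (abs_add_le _ _).trans ?_
      have := Int.floor_le e
      have := Int.lt_floor_add_one e
      gcongr
      rw [abs_le]; constructor <;> linarith
    set x := |(m : ℝ) - e| with hx
    have h2 : ((m : ℝ) - e) ^ 2 = x ^ 2 := (sq_abs _).symm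
    rw [h2]
    have h3 : b ^ 2 * x ^ 2 ≤ a * x ^ 2 := by gcongr
    have h4 : b * |((m - ⌊e⌋ : ℤ) : ℝ)| ≤ b * (x + 1) := by gcongr
    nlinarith [sq_nonneg (b * x - 1 / 2)]
  refine (ENNReal.tsum_le_tsum hpt).trans ?_
  rw [ENNReal.tsum_mul_left, ENNReal.ofReal_mul (Real.exp_nonneg _)]
  gcongr
  have := (Equiv.subRight ⌊e⌋).tsum_eq (fun m : ℤ => ENNReal.ofReal (Real.exp (-b * |(m : ℝ)|)))
  simp only [Equiv.subRight_apply] at this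
  rw [this]
  exact exp_sum hb hb1

lemma sum_prs_le {n : ℕ} (f : Fin n → Fin n → ℝ) (hf : ∀ i j, 0 ≤ f i j) :
    ∑ p : Prs n, f p.1.1 p.1.2 ≤ ∑ i, ∑ j, f i j := by
  rw [← Fintype.sum_prod_type' (f := f)]
  rw [← Finset.sum_subtype (Finset.univ.filter fun p : Fin n × Fin n => p.1 ≤ p.2) (by simp)
    (fun p : Fin n × Fin n => f p.1 p.2)]
  exact Finset.sum_le_sum_of_subset_of_nonneg (Finset.filter_subset _ _) fun p _ _ => hf _ _

lemma prod_prs {n : ℕ} (g : Fin n → ℝ) :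
    ∏ p : Prs n, (g p.1.1 * g p.1.2) = ∏ i, g i ^ (n + 1) := by
  rw [← Finset.prod_subtype (Finset.univ.filter fun p : Fin n × Fin n => p.1 ≤ p.2) (by simp)
    (fun p : Fin n × Fin n => g p.1 * g p.2), Finset.prod_mul_distrib, Finset.prod_filter,
    Finset.prod_filter, Fintype.prod_prod_type, Fintype.prod_prod_type_right,
    ← Finset.prod_mul_distrib]
  refine Finset.prod_congr rfl fun i _ => ?_
  simp only
  rw [← Finset.prod_filter, ← Finset.prod_filter, Finset.prod_const, Finset.prod_const, ← pow_add]
  congr 1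
  have e1 : (Finset.univ.filter fun j : Fin n => i ≤ j) = Finset.Ici i := by ext; simp
  have e2 : (Finset.univ.filter fun j : Fin n => j ≤ i) = Finset.Iic i := by ext; simp
  rw [e1, e2, Fin.card_Ici, Fin.card_Iic]
  have := i.2
  omega

lemma abs_entry_le {n : ℕ} {T : Matrix (Fin n) (Fin n) ℝ} (hT : T.PosSemidef) (i j : Fin n) :
    |T i j| ≤ (T i i + T j j) / 2 := by
  obtain ⟨B, rfl⟩ := exists_sq hT
  simp only [Matrix.mul_apply, Matrix.transpose_apply]
  rw [← Finset.sum_add_distrib, Finset.sum_div]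
  refine (Finset.abs_sum_le_sum_abs _ _).trans (Finset.sum_le_sum fun k _ => ?_)
  rw [abs_le]
  constructor <;> nlinarith [sq_nonneg (B k i - B k j), sq_nonneg (B k i + B k j)]

lemma one_le_diag {n : ℕ} (T : Lambda n) (i : Fin n) : 1 ≤ T.1 i i := by
  obtain ⟨z, hz⟩ := T.2.2.1 i
  have h := T.2.1.diag_pos (i := i)
  rw [hz] at h ⊢
  have : (0 : ℤ) < z := by exact_mod_cast h
  exact_mod_cast this

lemma peak_sum {n : ℕ} {c D : ℝ} (hc : 0 < c) (hD : 0 < D) :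
    ∃ C : ℝ, 0 < C ∧ ∀ (k : ℝ) (y : Fin n → ℝ) (e : Fin n → Fin n → ℝ), 0 < k → (∀ i, 1 ≤ y i) →
      (∀ i, y i ≤ D * k) →
      ∑' T : Lambda n, ENNReal.ofReal (Real.exp (-(c / k) *
        ∑ i, ∑ j, y i * y j * (T.1 i j - e i j) ^ 2)) ≤
      ENNReal.ofReal (C * (k ^ n / ∏ i, y i) ^ (((n : ℝ) + 1) / 4)) := by
  set c' := min (√c / 2) (√D)⁻¹ with hc'
  have hsc := Real.sqrt_pos.mpr hc
  have hsD := Real.sqrt_pos.mpr hD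
  have hc'0 : 0 < c' := lt_min (by positivity) (by positivity)
  refine ⟨∏ p : Prs n, (Real.exp (5 / 4) * (4 / c')), Finset.prod_pos fun _ _ => by positivity, ?_⟩
  intro k y e hk hy hyD
  have hy0 : ∀ i, 0 < y i := fun i => by linarith [hy i]
  set g : Fin n → ℝ := fun i => (k / y i) ^ (1 / 4 : ℝ) with hg
  have hg0 : ∀ i, 0 < g i := fun i => Real.rpow_pos_of_pos (div_pos hk (hy0 i)) _
  have hgsq : ∀ i, (g i ^ 2) ^ 2 = k / y i := fun i => by
    rw [← pow_mul, ← Real.rpow_natCast, hg]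
    simp only
    rw [← Real.rpow_mul (div_pos hk (hy0 i)).le]; norm_num
  have hpt : ∀ T : Lambda n, ENNReal.ofReal (Real.exp (-(c / k) *
        ∑ i, ∑ j, y i * y j * (T.1 i j - e i j) ^ 2)) ≤
      ∏ p : Prs n, ENNReal.ofReal (Real.exp (-(c / (4 * k) * (y p.1.1 * y p.1.2)) *
        (2 * T.1 p.1.1 p.1.2 - 2 * e p.1.1 p.1.2) ^ 2)) := by
    intro T
    rw [← ENNReal.ofReal_prod_of_nonneg (fun _ _ => Real.exp_nonneg _), ← Real.exp_sum]
    apply ENNReal.ofReal_le_ofReal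
    apply Real.exp_le_exp.mpr
    have h := sum_prs_le (fun i j => y i * y j * (T.1 i j - e i j) ^ 2)
      (fun i j => by have := hy0 i; have := hy0 j; positivity)
    have h2 : (c / k) * ∑ p : Prs n, y p.1.1 * y p.1.2 * (T.1 p.1.1 p.1.2 - e p.1.1 p.1.2) ^ 2 ≤
      (c / k) * ∑ i, ∑ j, y i * y j * (T.1 i j - e i j) ^ 2 :=
      mul_le_mul_of_nonneg_left h (by positivity)
    have h3 : ∑ p : Prs n, -(c / (4 * k) * (y p.1.1 * y p.1.2)) *
        (2 * T.1 p.1.1 p.1.2 - 2 * e p.1.1 p.1.2) ^ 2 =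
        - ((c / k) * ∑ p : Prs n, y p.1.1 * y p.1.2 * (T.1 p.1.1 p.1.2 - e p.1.1 p.1.2) ^ 2) := by
      rw [Finset.mul_sum, ← Finset.sum_neg_distrib]
      refine Finset.sum_congr rfl fun p _ => ?_
      field_simp; ring
    rw [h3]
    linarith
  refine (ENNReal.tsum_le_tsum hpt).trans ?_
  refine (sum_lambda_le (fun p x => ENNReal.ofReal (Real.exp (-(c / (4 * k) * (y p.1.1 * y p.1.2)) *
        (x - 2 * e p.1.1 p.1.2) ^ 2)))).trans ?_
  calc _ ≤ ∏ p : Prs n, ENNReal.ofReal (Real.exp (5 / 4) * (4 / (c' / (g p.1.1 * g p.1.2)))) := by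
        refine Finset.prod_le_prod' fun p _ => ?_
        obtain ⟨⟨i, j⟩, -⟩ := p
        simp only
        have hi := hg0 i
        have hj := hg0 j
        have hyi := hy0 i
        have hyj := hy0 j
        have hgg : 0 < g i * g j := mul_pos hi hj
        have hggsq : ((g i * g j) ^ 2) ^ 2 = k ^ 2 / (y i * y j) := by
          rw [mul_pow, mul_pow, hgsq, hgsq]; field_simp
        apply gauss_sum
        · positivity
        · rw [div_le_one hgg]
          refine (min_le_right _ _).trans ?_
          rw [inv_le_iff_one_le_mul₀ hsD]
          have h1 : 1 ≤ ((g i * g j * √D) ^ 2) ^ 2 := by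
            rw [mul_pow, mul_pow, hggsq, Real.sq_sqrt hD.le, div_mul_eq_mul_div, one_le_div (by positivity)]
            calc y i * y j ≤ (D * k) * (D * k) := mul_le_mul (hyD i) (hyD j) hyj.le (by positivity)
              _ = _ := by ring
          rw [← pow_mul] at h1
          by_contra hlt
          push Not at hlt
          exact absurd h1 (not_le.mpr (pow_lt_one₀ (by positivity) hlt (by norm_num)))
        · have h1 : c' ^ 2 ≤ c / 4 := by
            calc c' ^ 2 ≤ (√c / 2) ^ 2 := by gcongr; exact min_le_left _ _
              _ = c / 4 := by rw [div_pow, Real.sq_sqrt hc.le]; norm_num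
          have h2 : k / (y i * y j) ≤ (g i * g j) ^ 2 := by
            have hyy : 1 ≤ y i * y j := one_le_mul_of_one_le_of_one_le (hy i) (hy j)
            have : (k / (y i * y j)) ^ 2 ≤ ((g i * g j) ^ 2) ^ 2 := by
              rw [hggsq, div_pow]
              apply div_le_div_of_nonneg_left (by positivity) (by positivity)
              nlinarith
            exact (sq_le_sq₀ (by positivity) (by positivity)).mp this
          rw [div_pow, div_le_iff₀ (by positivity)]
          calc c' ^ 2 ≤ c / 4 := h1
            _ = c / (4 * k) * (y i * y j) * (k / (y i * y j)) := by field_simp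
            _ ≤ _ := by gcongr
    _ = ENNReal.ofReal ((∏ p : Prs n, (Real.exp (5 / 4) * (4 / c'))) * ∏ p : Prs n, (g p.1.1 * g p.1.2)) := by
        rw [← ENNReal.ofReal_prod_of_nonneg, ← Finset.prod_mul_distrib]
        · congr 1
          refine Finset.prod_congr rfl fun p _ => ?_
          have := (hg0 p.1.1).ne'
          have := (hg0 p.1.2).ne'
          field_simp
        · intro p _
          have := hg0 p.1.1
          have := hg0 p.1.2
          positivity
    _ = _ := by
        rw [prod_prs]
        congr 2
        have : k ^ n / ∏ i, y i = ∏ i, (k / y i) := by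
          rw [Finset.prod_div_distrib]; simp
        rw [this, ← Real.finsetProd_rpow _ _ (fun i _ => (div_pos hk (hy0 i)).le)]
        refine Finset.prod_congr rfl fun i _ => ?_
        rw [hg]
        simp only
        rw [← Real.rpow_natCast, ← Real.rpow_mul (div_pos hk (hy0 i)).le]
        congr 1
        push_cast; ring

lemma tail_sum {n : ℕ} (hn : 1 ≤ n) {c : ℝ} (hc : 0 < c) :
    ∃ K : ℝ, 0 < K ∧ ∀ (y : Fin n → ℝ), (∀ i, 1 ≤ y i) →
      ∑' T : Lambda n, ENNReal.ofReal (Real.exp (-c * ∑ i, T.1 i i * y i)) ≤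
      ENNReal.ofReal (K * Real.exp (-(c / 2) * ∑ i, y i)) := by
  have hn0 : (0 : ℝ) < n := by exact_mod_cast hn
  set b := min 1 (c / (4 * n)) with hb
  have hb0 : 0 < b := lt_min one_pos (by positivity)
  refine ⟨∏ p : Prs n, (4 / b), Finset.prod_pos fun _ _ => by positivity, ?_⟩
  intro y hy
  have hpt : ∀ T : Lambda n, ENNReal.ofReal (Real.exp (-c * ∑ i, T.1 i i * y i)) ≤
      ENNReal.ofReal (Real.exp (-(c / 2) * ∑ i, y i)) *
      ∏ p : Prs n, ENNReal.ofReal (Real.exp (-b * |2 * T.1 p.1.1 p.1.2|)) := by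
    intro T
    rw [← ENNReal.ofReal_prod_of_nonneg (fun _ _ => Real.exp_nonneg _), ← Real.exp_sum,
      ← ENNReal.ofReal_mul (Real.exp_nonneg _), ← Real.exp_add]
    apply ENNReal.ofReal_le_ofReal
    apply Real.exp_le_exp.mpr
    have h1 : (∑ i, T.1 i i) / 2 + (∑ i, y i) / 2 ≤ ∑ i, T.1 i i * y i := by
      rw [Finset.sum_div, Finset.sum_div, ← Finset.sum_add_distrib]
      refine Finset.sum_le_sum fun i _ => ?_
      have h2 := one_le_diag T i
      have h3 := hy i
      nlinarith [mul_nonneg (sub_nonneg.mpr h2) (sub_nonneg.mpr h3)]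
    have h2 : ∑ p : Prs n, |T.1 p.1.1 p.1.2| ≤ n * ∑ i, T.1 i i := by
      refine (sum_prs_le (fun i j => |T.1 i j|) (fun _ _ => abs_nonneg _)).trans ?_
      refine (Finset.sum_le_sum fun i _ => Finset.sum_le_sum fun j _ =>
        abs_entry_le T.2.1.posSemidef i j).trans ?_
      simp only [← Finset.sum_div, Finset.sum_add_distrib, Finset.sum_const, Finset.card_univ,
        Fintype.card_fin, nsmul_eq_mul, ← Finset.mul_sum]
      linarith
    have h3 : ∑ p : Prs n, -b * |2 * T.1 p.1.1 p.1.2| = -(2 * b * ∑ p : Prs n, |T.1 p.1.1 p.1.2|) := by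
      rw [Finset.mul_sum, ← Finset.sum_neg_distrib]
      refine Finset.sum_congr rfl fun p _ => ?_
      rw [abs_mul, abs_two]; ring
    rw [h3]
    have h4 : 2 * b * ∑ p : Prs n, |T.1 p.1.1 p.1.2| ≤ c / 2 * ∑ i, T.1 i i := by
      have hS : 0 ≤ ∑ p : Prs n, |T.1 p.1.1 p.1.2| := Finset.sum_nonneg fun _ _ => abs_nonneg _
      calc 2 * b * ∑ p : Prs n, |T.1 p.1.1 p.1.2| ≤ 2 * (c / (4 * n)) * (n * ∑ i, T.1 i i) := by
            gcongr; exact min_le_right _ _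
        _ = _ := by field_simp; ring
    have h5 := mul_le_mul_of_nonneg_left h1 hc.le
    linarith
  refine (ENNReal.tsum_le_tsum hpt).trans ?_
  rw [ENNReal.tsum_mul_left, mul_comm, ENNReal.ofReal_mul (Finset.prod_nonneg fun _ _ => by positivity)]
  gcongr
  refine (sum_lambda_le (fun _ x => ENNReal.ofReal (Real.exp (-b * |x|)))).trans ?_
  rw [ENNReal.ofReal_prod_of_nonneg (fun _ _ => by positivity)]
  exact Finset.prod_le_prod' fun p _ => exp_sum hb0 (min_le_left _ _)


lemma poly_exp (M : ℝ) {c : ℝ} (hc : 0 < c) :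
    ∃ C : ℝ, 0 < C ∧ ∀ x : ℝ, 1 ≤ x → x ^ M ≤ C * Real.exp (c * x) := by
  set N := |M| with hN
  have hN0 : 0 ≤ N := abs_nonneg M
  refine ⟨Real.exp (N * Real.log ((N + 1) / c)), Real.exp_pos _, fun x hx => ?_⟩
  have hx0 : 0 < x := by linarith
  refine (Real.rpow_le_rpow_of_exponent_le hx (le_abs_self M)).trans ?_
  rw [Real.rpow_def_of_pos hx0, ← Real.exp_add]
  apply Real.exp_le_exp.mpr
  have h1 : Real.log x = Real.log (c * x / (N + 1)) + Real.log ((N + 1) / c) := by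
    rw [← Real.log_mul (by positivity) (by positivity)]
    congr 1; field_simp
  have h2 := Real.log_le_sub_one_of_pos (show 0 < c * x / (N + 1) by positivity)
  rw [h1]
  have h3 : N * Real.log (c * x / (N + 1)) ≤ N * (c * x / (N + 1)) := by
    gcongr; linarith
  have h4 : N * (c * x / (N + 1)) ≤ c * x := by
    rw [mul_div_assoc', div_le_iff₀ (by positivity)]
    have : 0 < c * x := by positivity
    nlinarith
  rw [← hN]
  linarith

lemma phi_split {n : ℕ} (hn : 1 ≤ n) {l : Fin n → ℝ} (hl : ∀ i, 0 < l i) :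
    ((∑ i, l i ≤ 2 * n) ∧ (∑ i, (l i - 1) ^ 2) / 5 ≤ ∑ i, phi (l i)) ∨
      1 / 80 + (∑ i, l i) / (160 * n) ≤ ∑ i, phi (l i) := by
  have hn0 : (1 : ℝ) ≤ n := by exact_mod_cast hn
  by_cases h : ∀ i, |l i - 1| ≤ 1 / 2
  · left
    have h' : ∀ i, l i ≤ 3 / 2 := fun i => by have := (abs_le.mp (h i)).2; linarith
    constructor
    · calc ∑ i, l i ≤ ∑ i : Fin n, (2 : ℝ) := Finset.sum_le_sum fun i _ => by linarith [h' i]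
        _ = _ := by simp; ring
    · rw [Finset.sum_div]
      exact Finset.sum_le_sum fun i _ => phi_near (hl i) (h' i)
  · right
    push Not at h
    obtain ⟨i, hi⟩ := h
    have h1 : 1 / 20 ≤ ∑ i, phi (l i) :=
      (phi_far (hl i) hi).trans (Finset.single_le_sum (f := fun i => phi (l i))
        (fun j _ => phi_nonneg (hl j)) (Finset.mem_univ i))
    have h2 : (∑ i, l i) / 4 - n ≤ ∑ i, phi (l i) := by
      calc (∑ i, l i) / 4 - n = ∑ i, (l i / 4 - 1) := by
            rw [Finset.sum_sub_distrib, Finset.sum_div]; simp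
        _ ≤ _ := Finset.sum_le_sum fun i _ => phi_lin (hl i)
    set S := ∑ i, l i
    set P := ∑ i, phi (l i)
    have h3 : S / (160 * n) ≤ (P + n) / (40 * n) := by
      rw [div_le_div_iff₀ (by positivity) (by positivity)]
      nlinarith
    have h4 : (P + n) / (40 * n) = P / (40 * n) + 1 / 40 := by field_simp
    have h5 : P / (40 * n) ≤ P / 40 := by
      apply div_le_div_of_nonneg_left (by linarith) (by norm_num) (by linarith)
    rw [h4] at h3
    linarith

lemma diag_ge_one {n : ℕ} {Y : Matrix (Fin n) (Fin n) ℝ} (h : LoewnerLE 1 Y) (i : Fin n) :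
    1 ≤ Y i i := by
  have := Matrix.PosSemidef.diag_nonneg (i := i) h
  simpa using this

set_option maxHeartbeats 2000000 in
theorem statement6 {n : ℕ} (hn : 1 ≤ n) (r ε α β A : ℝ) (hr : 1 ≤ r)
    (hε : ε ∈ Set.Ioo (0 : ℝ) 1) (hA : 0 < A) :
    ∃ C : ℝ, 0 < C ∧ ∃ c₀ : ℝ, 0 < c₀ ∧ ∃ k₀ : ℕ, ∀ k : ℕ, k₀ ≤ k →
      ∀ p : Lambda n → ℝ, Admissible n k α β A p →
      ∀ Y : Matrix (Fin n) (Fin n) ℝ, MinkReduced r Y → LoewnerLE 1 Y →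
        qk n k p Y ≤ ENNReal.ofReal
          (C * (((k : ℝ) ^ n / Y.det) ^ (((n : ℝ) + 1) / 4 - β) *
              (k : ℝ) ^ ((n : ℝ) / 4 + α + ε) +
            Real.exp (-c₀ * (k : ℝ) ^ ε) * Y.det ^ (-((n : ℝ) + 1) / 2))) := by
  have hr0 : 0 < r := by linarith
  have hn0 : (0 : ℝ) < n := by exact_mod_cast hn
  have hpi := Real.pi_pos
  obtain ⟨C₂, hC₂, hpeak⟩ := peak_sum (n := n) (c := (4 * π) ^ 2 / (20 * r ^ 2)) (D := 2 * n * r)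
    (by positivity) (by positivity)
  set c₃ := π / (160 * n * r) with hc₃
  have hc₃0 : 0 < c₃ := by positivity
  obtain ⟨K, hK, htail⟩ := tail_sum hn hc₃0
  set M := |β| + ((n : ℝ) + 1) / 2 with hM
  have hM0 : 0 ≤ M := by positivity
  set s := α + n / 4 - n * β with hs
  obtain ⟨C₃, hC₃, hpe⟩ := poly_exp M (half_pos hc₃0)
  obtain ⟨C₄, hC₄, hpk⟩ := poly_exp s (show (0 : ℝ) < 1 / 640 by norm_num)
  set C₁ := A * (4 * π) ^ (n * β) * Real.exp (n * |β|) with hC₁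
  have hC₁0 : 0 < C₁ := by positivity
  refine ⟨max (C₁ * C₂) (C₁ * K * C₃ ^ n * C₄), lt_max_of_lt_left (by positivity), 1 / 640,
    by norm_num, max 1 ⌈4 * |β|⌉₊, ?_⟩
  intro k hk p hp Y hY hY1
  have hk1 : 1 ≤ k := (le_max_left _ _).trans hk
  have hkβ : 4 * |β| ≤ k := (Nat.le_ceil _).trans (by exact_mod_cast (le_max_right _ _).trans hk)
  have hk1' : (1 : ℝ) ≤ k := by exact_mod_cast hk1
  have hk0 : (0 : ℝ) < k := by linarith
  have hy1 := diag_ge_one hY1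
  have hy0 : ∀ i, 0 < Y i i := fun i => by linarith [hy1 i]
  have hdY := hY.1.det_pos
  have hdY1 : 1 ≤ Y.det := one_le_det hY.1 hY1
  have hhad := det_le_prod_diag hY.1
  have ht : (0 : ℝ) < 4 * π / k := by positivity
  set Pref := C₁ * ((k : ℝ) ^ s * Y.det ^ β) with hPref
  have hPref0 : 0 < Pref := by positivity
  set e : Matrix (Fin n) (Fin n) ℝ := (4 * π / k : ℝ)⁻¹ • Y⁻¹ with he
  set G : Lambda n → ℝ≥0∞ := fun T => ENNReal.ofReal (Real.exp (-((4 * π) ^ 2 / (20 * r ^ 2) / k) *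
        ∑ i, ∑ j, Y i i * Y j j * (T.1 i j - e i j) ^ 2)) with hG
  set R : Lambda n → ℝ≥0∞ := fun T => ENNReal.ofReal (Real.exp (-(k / 320 : ℝ))) *
    ENNReal.ofReal (Real.exp (-c₃ * ∑ i, T.1 i i * Y i i)) with hR
  set b : ℝ≥0∞ := if ∀ i, Y i i ≤ 2 * n * r * k then 1 else 0 with hb
  have hterm : ∀ T : Lambda n, ENNReal.ofReal
      (Real.sqrt (p T) * Y.det ^ ((k : ℝ) / 2) * Real.exp (-2 * π * (T.1 * Y).trace)) ≤
      ENNReal.ofReal Pref * (b * G T + R T) := by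
    intro T
    obtain ⟨l, hl, h1, h2, h3⟩ := eigTY T.2.1 hY.1 ht
    have hb1 := term_bound hk1 hA hkβ T.2.1.det_pos hdY (hp.2 T) hl h1 h2
    refine (ENNReal.ofReal_le_ofReal hb1).trans ?_
    rw [ENNReal.ofReal_mul hPref0.le]
    gcongr
    have htr := trace_TY_ge T.2.1.posSemidef hY.2.1
    rcases phi_split hn hl with ⟨hA1, hA2⟩ | hB
    · refine le_trans ?_ (le_add_of_nonneg_right zero_le)
      have hcond : ∀ i, Y i i ≤ 2 * n * r * k := by
        intro i
        have h4 : Y i i ≤ ∑ i, T.1 i i * Y i i := by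
          refine le_trans ?_ (Finset.single_le_sum (f := fun i => T.1 i i * Y i i)
            (fun j _ => mul_nonneg (by linarith [one_le_diag T j]) (hy0 j).le) (Finset.mem_univ i))
          have := one_le_diag T i
          have := hy0 i
          nlinarith
        have h5 : r⁻¹ * Y i i ≤ (T.1 * Y).trace := le_trans (by gcongr) htr
        rw [← h1] at hA1
        have h6 : (4 * π / k) * (r⁻¹ * Y i i) ≤ 2 * n := le_trans (by gcongr) hA1
        have h7 : 4 * π * Y i i ≤ 2 * n * r * k := by
          have : (4 * π / k) * (r⁻¹ * Y i i) = 4 * π * Y i i / (k * r) := by field_simp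
          rw [this, div_le_iff₀ (by positivity)] at h6
          linarith
        have := hy0 i
        nlinarith [Real.pi_gt_three]
      rw [hb, if_pos hcond, one_mul, hG]
      apply ENNReal.ofReal_le_ofReal
      apply Real.exp_le_exp.mpr
      have hE : (T.1 - e).IsHermitian := by
        refine T.2.1.1.sub ?_
        rw [he]
        exact (hY.1.inv.smul (inv_pos.mpr ht)).1
      have h8 := trace_EYEY_ge hr0 hE hY.1 hY.2.1
      simp only [Matrix.sub_apply] at h8
      rw [← h3] at hA2
      set S := ∑ i, ∑ j, Y i i * Y j j * (T.1 i j - e i j) ^ 2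
      have h9 : (k / 4 : ℝ) * ((4 * π / k) ^ 2 * ((r⁻¹) ^ 2 * S) / 5) ≤ k / 4 * ∑ i, phi (l i) := by
        gcongr
        refine le_trans ?_ hA2
        gcongr
      have h10 : (k / 4 : ℝ) * ((4 * π / k) ^ 2 * ((r⁻¹) ^ 2 * S) / 5) =
          (4 * π) ^ 2 / (20 * r ^ 2) / k * S := by field_simp; ring
      linarith
    · refine le_trans ?_ (le_add_of_nonneg_left zero_le)
      rw [hR]
      simp only
      rw [← ENNReal.ofReal_mul (Real.exp_nonneg _), ← Real.exp_add]
      apply ENNReal.ofReal_le_ofReal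
      apply Real.exp_le_exp.mpr
      rw [← h1] at hB
      have h9 : (k / 4 : ℝ) * (1 / 80 + (4 * π / k) * (r⁻¹ * ∑ i, T.1 i i * Y i i) / (160 * n)) ≤
          k / 4 * ∑ i, phi (l i) := by
        gcongr
        refine le_trans ?_ hB
        gcongr
      have h10 : (k / 4 : ℝ) * (1 / 80 + (4 * π / k) * (r⁻¹ * ∑ i, T.1 i i * Y i i) / (160 * n)) =
          k / 320 + c₃ * ∑ i, T.1 i i * Y i i := by rw [hc₃]; field_simp; ring
      linarith
  have hq : qk n k p Y ≤ ENNReal.ofReal Pref * (b * ∑' T, G T + ∑' T, R T) := by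
    unfold qk
    refine (ENNReal.tsum_le_tsum hterm).trans ?_
    rw [ENNReal.tsum_mul_left, ENNReal.tsum_add, ENNReal.tsum_mul_left]
  have hbG : b * ∑' T, G T ≤ ENNReal.ofReal (C₂ * ((k : ℝ) ^ n / Y.det) ^ (((n : ℝ) + 1) / 4)) := by
    by_cases hcond : ∀ i, Y i i ≤ 2 * n * r * k
    · rw [hb, if_pos hcond, one_mul]
      refine (hpeak k (fun i => Y i i) (fun i j => e i j) hk0 hy1 hcond).trans ?_
      apply ENNReal.ofReal_le_ofReal
      have hpr : 0 < ∏ i, Y i i := Finset.prod_pos fun i _ => hy0 i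
      gcongr
    · rw [hb, if_neg hcond, zero_mul]; exact zero_le
  have hRs : ∑' T, R T ≤ ENNReal.ofReal (Real.exp (-(k / 320 : ℝ)) *
      (K * Real.exp (-(c₃ / 2) * ∑ i, Y i i))) := by
    rw [hR, ENNReal.tsum_mul_left, ENNReal.ofReal_mul (Real.exp_nonneg _)]
    gcongr
    exact htail (fun i => Y i i) hy1
  refine hq.trans ?_
  refine (mul_le_mul_right (add_le_add hbG hRs) _).trans ?_
  rw [← ENNReal.ofReal_add (by positivity) (by positivity), ← ENNReal.ofReal_mul hPref0.le]
  apply ENNReal.ofReal_le_ofReal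
  rw [mul_add, mul_add]
  apply add_le_add
  · have e1 : Pref * (C₂ * ((k : ℝ) ^ n / Y.det) ^ (((n : ℝ) + 1) / 4)) =
        C₁ * C₂ * (((k : ℝ) ^ n / Y.det) ^ (((n : ℝ) + 1) / 4 - β) * (k : ℝ) ^ ((n : ℝ) / 4 + α)) := by
      have hkn : (0 : ℝ) < (k : ℝ) ^ n := by positivity
      rw [Real.rpow_sub (by positivity), Real.div_rpow hkn.le hdY.le β, hPref, hs,
        show α + n / 4 - n * β = (n / 4 + α) - n * β by ring, Real.rpow_sub hk0,
        Real.rpow_mul hk0.le, Real.rpow_natCast]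
      have := Real.rpow_pos_of_pos hkn β
      have := Real.rpow_pos_of_pos hdY β
      field_simp
    rw [e1]
    have e2 : (k : ℝ) ^ ((n : ℝ) / 4 + α) ≤ (k : ℝ) ^ ((n : ℝ) / 4 + α + ε) :=
      Real.rpow_le_rpow_of_exponent_le hk1' (by linarith [hε.1])
    gcongr
    exact le_max_left _ _
  · have f1 : Y.det ^ β = Y.det ^ (β + ((n : ℝ) + 1) / 2) * Y.det ^ (-((n : ℝ) + 1) / 2) := by
      rw [← Real.rpow_add hdY]; congr 1; ring
    have f2 : Y.det ^ (β + ((n : ℝ) + 1) / 2) ≤ C₃ ^ n * Real.exp ((c₃ / 2) * ∑ i, Y i i) := by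
      calc Y.det ^ (β + ((n : ℝ) + 1) / 2) ≤ Y.det ^ M :=
            Real.rpow_le_rpow_of_exponent_le hdY1 (by rw [hM]; linarith [le_abs_self β])
        _ ≤ (∏ i, Y i i) ^ M := Real.rpow_le_rpow hdY.le hhad hM0
        _ = ∏ i, (Y i i) ^ M := (Real.finsetProd_rpow _ _ (fun i _ => (hy0 i).le) _).symm
        _ ≤ ∏ i : Fin n, (C₃ * Real.exp ((c₃ / 2) * Y i i)) :=
            Finset.prod_le_prod (fun i _ => Real.rpow_nonneg (hy0 i).le _) fun i _ => hpe _ (hy1 i)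
        _ = _ := by
            rw [Finset.prod_mul_distrib, ← Real.exp_sum, Finset.mul_sum]; simp
    have f3 := hpk k hk1'
    have f4 : (k : ℝ) ^ ε ≤ k := by
      calc (k : ℝ) ^ ε ≤ (k : ℝ) ^ (1 : ℝ) := Real.rpow_le_rpow_of_exponent_le hk1' hε.2.le
        _ = k := Real.rpow_one _
    set S := ∑ i, Y i i
    set w := Y.det ^ (-((n : ℝ) + 1) / 2) with hw
    have hw0 : 0 < w := by positivity
    rw [hPref, f1]
    calc C₁ * ((k : ℝ) ^ s * (Y.det ^ (β + ((n : ℝ) + 1) / 2) * w)) *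
          (Real.exp (-(k / 320 : ℝ)) * (K * Real.exp (-(c₃ / 2) * S)))
        ≤ C₁ * ((C₄ * Real.exp (1 / 640 * k)) * ((C₃ ^ n * Real.exp ((c₃ / 2) * S)) * w)) *
          (Real.exp (-(k / 320 : ℝ)) * (K * Real.exp (-(c₃ / 2) * S))) := by gcongr
      _ = C₁ * K * C₃ ^ n * C₄ * ((Real.exp (1 / 640 * k) * Real.exp (-(k / 320 : ℝ))) *
            (Real.exp ((c₃ / 2) * S) * Real.exp (-(c₃ / 2) * S)) * w) := by ring
      _ = C₁ * K * C₃ ^ n * C₄ * (Real.exp (-(1 / 640) * k) * w) := by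
          rw [← Real.exp_add, ← Real.exp_add]
          have g1 : (c₃ / 2) * S + -(c₃ / 2) * S = 0 := by ring
          have g2 : (1 / 640 * k : ℝ) + -(k / 320) = -(1 / 640) * k := by ring
          rw [g1, g2, Real.exp_zero, mul_one]
      _ ≤ _ := by
          have : Real.exp (-(1 / 640) * (k : ℝ)) ≤ Real.exp (-(1 / 640) * (k : ℝ) ^ ε) := by
            apply Real.exp_le_exp.mpr; linarith
          gcongr
          exact le_max_right _ _
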